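/- (Final chain in the proof of Lemma 4 of the paper.) With μ_I and μ_II the Case I and Case II schedules built from integers k ≥ 0, k1 ≥ 0, k2 ≥ 1 and a common schedule ν, and T = k + k1 + k2 + 1: ∑_{m=0}^{k1+k2} (A_{μ_I}(T−m) − A_{μ_II}(T−m)) = ((μ* − μ_min)(1 − (1−μ_min)^{k2})/μ_min) · ((1 − (1−μ*)^{k1+1})/μ* − A_ν(k)), where A_ν(k) = ∑_{τ=0}^∞ ∏_{i=0}^{τ-1} (1 − ν(k−i)); moreover this quantity is ≤ 0, since A_ν(k) ≥ 1/μ*. -/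

import Mathlib

/-- The expected Age-of-Information at time-slot `t` under a per-slot
success-probability function `μ : ℤ → ℝ`: the series
`A_μ(t) = ∑_{τ=0}^∞ ∏_{i=0}^{τ-1} (1 − μ(t−i))`, where the `τ = 0` term
(the empty product) equals 1. -/
noncomputable def aoi (μ : ℤ → ℝ) (t : ℤ) : ℝ :=
  ∑' τ : ℕ, ∏ i ∈ Finset.range τ, (1 - μ (t - (i : ℤ)))

/-- Case I schedule: `ν(s)` for `s ≤ k`; `μ*` in slot `k+1`; the worst channel
`μ_min` in slots `k+2` to `k+k2+1`; the optimal channel `μ*` thereafter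
(in particular in slots `k+k2+2` to `T = k+k1+k2+1`). -/
noncomputable def caseI (μmin μstar : ℝ) (ν : ℤ → ℝ) (k k2 : ℕ) : ℤ → ℝ :=
  fun s =>
    if s ≤ (k : ℤ) then ν s
    else if s = (k : ℤ) + 1 then μstar
    else if s ≤ (k : ℤ) + (k2 : ℤ) + 1 then μmin
    else μstar

/-- Case II schedule: `ν(s)` for `s ≤ k`; the worst channel `μ_min` in slots
`k+1` to `k+k2`; the optimal channel `μ*` thereafter
(in particular in slots `k+k2+1` to `T = k+k1+k2+1`). -/
noncomputable def caseII (μmin μstar : ℝ) (ν : ℤ → ℝ) (k k2 : ℕ) : ℤ → ℝ :=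
  fun s =>
    if s ≤ (k : ℤ) then ν s
    else if s ≤ (k : ℤ) + (k2 : ℤ) then μmin
    else μstar

theorem aoi_summable (m : ℝ) (hm : 0 < m) (μ : ℤ → ℝ) (h : ∀ s, m ≤ μ s ∧ μ s ≤ 1) (t : ℤ) :
    Summable (fun τ : ℕ => ∏ i ∈ Finset.range τ, (1 - μ (t - (i : ℤ)))) := by
  have hm1 : m ≤ 1 := (h 0).1.trans (h 0).2
  refine Summable.of_nonneg_of_le (f := fun τ : ℕ => (1 - m) ^ τ) ?_ ?_ ?_
  · intro τ
    exact Finset.prod_nonneg fun i _ => by linarith [(h (t - i)).2]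
  · intro τ
    calc _ ≤ ∏ i ∈ Finset.range τ, (1 - m) := by
          refine Finset.prod_le_prod ?_ ?_
          · intro i _; linarith [(h (t - i)).2]
          · intro i _; linarith [(h (t - i)).1]
      _ = _ := by simp
  · exact summable_geometric_of_lt_one (by linarith) (by linarith)

theorem aoi_rec (m : ℝ) (hm : 0 < m) (μ : ℤ → ℝ) (h : ∀ s, m ≤ μ s ∧ μ s ≤ 1) (t : ℤ) :
    aoi μ (t + 1) = 1 + (1 - μ (t + 1)) * aoi μ t := by
  unfold aoi
  rw [(aoi_summable m hm μ h (t + 1)).tsum_eq_zero_add, ← tsum_mul_left]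
  rw [Finset.prod_range_zero]
  refine congrArg (fun z : ℝ => 1 + z) (tsum_congr fun τ => ?_)
  rw [Finset.prod_range_succ', mul_comm]
  have e : ∏ i ∈ Finset.range τ, (1 - μ (t + 1 - ((i + 1 : ℕ) : ℤ))) =
      ∏ i ∈ Finset.range τ, (1 - μ (t - (i : ℤ))) := by
    refine Finset.prod_congr rfl fun i _ => ?_
    rw [show t + 1 - ((i + 1 : ℕ) : ℤ) = t - (i : ℤ) by push_cast; ring]
  rw [e]
  simp

theorem aoi_lower (m M : ℝ) (hm : 0 < m) (hM : m ≤ M) (hM1 : M ≤ 1) (μ : ℤ → ℝ)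
    (h : ∀ s, m ≤ μ s ∧ μ s ≤ M) (t : ℤ) : 1 / M ≤ aoi μ t := by
  have hs := aoi_summable m hm μ (fun s => ⟨(h s).1, (h s).2.trans hM1⟩) t
  have hg := summable_geometric_of_lt_one (r := 1 - M) (by linarith) (by linarith)
  have e : 1 / M = ∑' n : ℕ, (1 - M) ^ n := by
    rw [tsum_geometric_of_lt_one (by linarith) (by linarith)]
    simp
  rw [e]
  unfold aoi
  refine hg.tsum_le_tsum (fun τ => ?_) hs
  calc (1 - M) ^ τ = ∏ i ∈ Finset.range τ, (1 - M) := by simp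
    _ ≤ _ := by
      refine Finset.prod_le_prod ?_ ?_
      · intro i _; linarith
      · intro i _; linarith [(h (t - i)).2]

theorem aoi_congr (μ ν : ℤ → ℝ) (t : ℤ) (h : ∀ s, s ≤ t → μ s = ν s) : aoi μ t = aoi ν t := by
  unfold aoi
  refine tsum_congr fun τ => Finset.prod_congr rfl fun i _ => ?_
  rw [h _ (by omega)]

theorem stmt_aux (p q A : ℝ) (hp : 0 < p) (hq : 0 < q) (n : ℕ) (x y : ℕ → ℝ)
    (hx0 : x 0 = 1 + (1 - q) * A) (hy0 : y 0 = 1 + (1 - p) * A)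
    (hx1 : ∀ j, j < n → x (j + 1) = 1 + (1 - p) * x j)
    (hy1 : ∀ j, j + 1 < n → y (j + 1) = 1 + (1 - p) * y j)
    (hx2 : ∀ j, n ≤ j → x (j + 1) = 1 + (1 - q) * x j)
    (hy2 : ∀ j, n ≤ j + 1 → y (j + 1) = 1 + (1 - q) * y j) (hn : 1 ≤ n) (l : ℕ) :
    ∑ j ∈ Finset.range (l + n + 1), (x j - y j) =
      (q - p) * (1 - (1 - p) ^ n) / p * ((1 - (1 - q) ^ (l + 1)) / q - A) := by
  have hpn := hp.ne'
  have hqn := hq.ne'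
  have X : ∀ j, j ≤ n → x j = (1 - p) ^ j * (1 + (1 - q) * A) + (1 - (1 - p) ^ j) / p := by
    intro j
    induction j with
    | zero => intro _; simp [hx0]
    | succ j ih =>
      intro hj
      rw [hx1 j hj, ih (by omega)]
      field_simp
      ring
  have Y : ∀ j, j < n → y j = (1 - p) ^ (j + 1) * A + (1 - (1 - p) ^ (j + 1)) / p := by
    intro j
    induction j with
    | zero => intro _; rw [hy0]; field_simp; ring
    | succ j ih =>
      intro hj
      rw [hy1 j hj, ih (by omega)]
      field_simp
      ring
  have D : ∀ i, x (n + i) - y (n + i) = (1 - q) ^ i * ((q - p) * (1 - (1 - p) ^ n) / p) := by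
    intro i
    induction i with
    | zero =>
      obtain ⟨r, rfl⟩ : ∃ r, n = r + 1 := ⟨n - 1, by omega⟩
      rw [add_zero, X _ le_rfl, hy2 r le_rfl, Y r (by omega)]
      field_simp
      ring
    | succ i ih =>
      rw [← add_assoc, hx2 _ (by omega), hy2 _ (by omega), pow_succ]
      linear_combination (1 - q) * ih
  have S1 : ∀ j, j ≤ n → ∑ i ∈ Finset.range j, (x i - y i) =
      -((q - p) * (1 - (1 - p) ^ j) / p * A) := by
    intro j
    induction j with
    | zero => intro _; simp
    | succ j ih =>
      intro hj
      rw [Finset.sum_range_succ, ih (by omega), X j (by omega), Y j (by omega)]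
      field_simp
      ring
  have S2 : ∀ j, ∑ i ∈ Finset.range j, (x (n + i) - y (n + i)) =
      (q - p) * (1 - (1 - p) ^ n) / p * ((1 - (1 - q) ^ j) / q) := by
    intro j
    induction j with
    | zero => simp
    | succ j ih =>
      rw [Finset.sum_range_succ, ih, D]
      field_simp
      ring
  rw [show l + n + 1 = n + (l + 1) by ring, Finset.sum_range_add, S1 n le_rfl, S2]
  ring

/-- (Final chain in the proof of Lemma 4.) With `μ_I`, `μ_II` the Case I and
Case II schedules built from `k ≥ 0`, `k1 ≥ 0`, `k2 ≥ 1` and a common schedule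
`ν`, and `T = k + k1 + k2 + 1`:
`∑_{m=0}^{k1+k2} (A_{μ_I}(T−m) − A_{μ_II}(T−m))
  = ((μ* − μ_min)(1 − (1−μ_min)^{k2})/μ_min) ((1 − (1−μ*)^{k1+1})/μ* − A_ν(k))`,
and this quantity is `≤ 0`, since `A_ν(k) ≥ 1/μ*`. -/
theorem stmt_7 (μmin μstar : ℝ) (hμmin_pos : 0 < μmin) (hμ_le : μmin ≤ μstar)
    (hμstar_le : μstar ≤ 1) (k k1 k2 : ℕ) (hk2 : 1 ≤ k2)
    (ν : ℤ → ℝ) (hν : ∀ s : ℤ, μmin ≤ ν s ∧ ν s ≤ μstar) :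
    (∑ m ∈ Finset.range (k1 + k2 + 1),
        (aoi (caseI μmin μstar ν k k2) ((k : ℤ) + k1 + k2 + 1 - m) -
          aoi (caseII μmin μstar ν k k2) ((k : ℤ) + k1 + k2 + 1 - m)) =
      (μstar - μmin) * (1 - (1 - μmin) ^ k2) / μmin *
        ((1 - (1 - μstar) ^ (k1 + 1)) / μstar - aoi ν k)) ∧
    (∑ m ∈ Finset.range (k1 + k2 + 1),
        (aoi (caseI μmin μstar ν k k2) ((k : ℤ) + k1 + k2 + 1 - m) -
          aoi (caseII μmin μstar ν k k2) ((k : ℤ) + k1 + k2 + 1 - m)) ≤ 0) := by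
  have hq : 0 < μstar := hμmin_pos.trans_le hμ_le
  have b1 : ∀ s, μmin ≤ caseI μmin μstar ν k k2 s ∧ caseI μmin μstar ν k k2 s ≤ 1 := by
    intro s
    have := hν s
    unfold caseI
    split_ifs <;> constructor <;> linarith
  have b2 : ∀ s, μmin ≤ caseII μmin μstar ν k k2 s ∧ caseII μmin μstar ν k k2 s ≤ 1 := by
    intro s
    have := hν s
    unfold caseII
    split_ifs <;> constructor <;> linarith
  have r1 := aoi_rec μmin hμmin_pos _ b1
  have r2 := aoi_rec μmin hμmin_pos _ b2
  have c1 : aoi (caseI μmin μstar ν k k2) k = aoi ν k :=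
    aoi_congr _ _ _ fun s hs => by simp [caseI, hs]
  have c2 : aoi (caseII μmin μstar ν k k2) k = aoi ν k :=
    aoi_congr _ _ _ fun s hs => by simp [caseII, hs]
  have main : ∑ m ∈ Finset.range (k1 + k2 + 1),
        (aoi (caseI μmin μstar ν k k2) ((k : ℤ) + k1 + k2 + 1 - m) -
          aoi (caseII μmin μstar ν k k2) ((k : ℤ) + k1 + k2 + 1 - m)) =
      (μstar - μmin) * (1 - (1 - μmin) ^ k2) / μmin *
        ((1 - (1 - μstar) ^ (k1 + 1)) / μstar - aoi ν k) := by
    rw [← stmt_aux μmin μstar (aoi ν k) hμmin_pos hq k2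
      (fun j => aoi (caseI μmin μstar ν k k2) ((k : ℤ) + j + 1))
      (fun j => aoi (caseII μmin μstar ν k k2) ((k : ℤ) + j + 1))
      ?_ ?_ ?_ ?_ ?_ ?_ hk2 k1]
    · rw [← Finset.sum_range_reflect]
      refine Finset.sum_congr rfl fun j hj => ?_
      have hj' := Finset.mem_range.1 hj
      have e : (k : ℤ) + k1 + k2 + 1 - ((k1 + k2 + 1 - 1 - j : ℕ) : ℤ) = k + j + 1 := by omega
      rw [e]
    · have := r1 k
      rw [c1] at this
      simp only [Nat.cast_zero, add_zero]
      rw [this]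
      simp [caseI]
    · have := r2 k
      rw [c2] at this
      simp only [Nat.cast_zero, add_zero]
      rw [this]
      have e : caseII μmin μstar ν k k2 ((k : ℤ) + 1) = μmin := by
        unfold caseII
        rw [if_neg (by omega), if_pos (by omega)]
      rw [e]
    · intro j hj
      have e : caseI μmin μstar ν k k2 ((k : ℤ) + j + 1 + 1) = μmin := by
        unfold caseI
        rw [if_neg (by omega), if_neg (by omega), if_pos (by omega)]
      have := r1 ((k : ℤ) + j + 1)
      rw [e] at this
      simpa [add_assoc] using this
    · intro j hj
      have e : caseII μmin μstar ν k k2 ((k : ℤ) + j + 1 + 1) = μmin := by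
        unfold caseII
        rw [if_neg (by omega), if_pos (by omega)]
      have := r2 ((k : ℤ) + j + 1)
      rw [e] at this
      simpa [add_assoc] using this
    · intro j hj
      have e : caseI μmin μstar ν k k2 ((k : ℤ) + j + 1 + 1) = μstar := by
        unfold caseI
        rw [if_neg (by omega), if_neg (by omega), if_neg (by omega)]
      have := r1 ((k : ℤ) + j + 1)
      rw [e] at this
      simpa [add_assoc] using this
    · intro j hj
      have e : caseII μmin μstar ν k k2 ((k : ℤ) + j + 1 + 1) = μstar := by
        unfold caseII
        rw [if_neg (by omega), if_neg (by omega)]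
      have := r2 ((k : ℤ) + j + 1)
      rw [e] at this
      simpa [add_assoc] using this
  refine ⟨main, ?_⟩
  rw [main]
  have hp1 : (1 - μmin) ^ k2 ≤ 1 := pow_le_one₀ (by linarith) (by linarith)
  have hA := aoi_lower μmin μstar hμmin_pos hμ_le hμstar_le ν hν k
  have hle : (1 - (1 - μstar) ^ (k1 + 1)) / μstar ≤ 1 / μstar := by
    have : 0 ≤ (1 - μstar) ^ (k1 + 1) := pow_nonneg (by linarith) _
    gcongr
    linarith
  refine mul_nonpos_of_nonneg_of_nonpos ?_ (by linarith)
  exact div_nonneg (mul_nonneg (by linarith) (by linarith)) hμmin_pos.le
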